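/- arXiv:1310.2261 — 10 statements merged into one kernel-verified Lean document; each statement's English description precedes it below -/
import Mathlib

section
/- For every integer N ≥ 1, the following identity holds in the polynomial ring ℤ[q]: q · Σ_{n=0}^{N−1} q^n · (1−q)(1−q²)⋯(1−q^n) = 1 − (1−q)(1−q²)⋯(1−q^N), where the empty product (case n = 0) equals 1. In particular, q · Σ_{n=0}^{N−1} q^n(1−q)⋯(1−q^n) ≡ 1 modulo the ideal generated by (1−q)(1−q²)⋯(1−q^N). -/
open Polynomial

/-- The terms telescope: with `P n = (1-q)⋯(1-q^n)`, one has
`q * (q^n * P n) = P n - (1 - q^(n+1)) * P n = P n - P (n+1)`. -/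
lemma X_mul_sum_qPochhammer (N : ℕ) :
    (X : ℤ[X]) * ∑ n ∈ Finset.range N, X ^ n * ∏ i ∈ Finset.Icc 1 n, (1 - X ^ i) =
      1 - ∏ i ∈ Finset.Icc 1 N, (1 - X ^ i) := by
  induction N with
  | zero => simp
  | succ N ih =>
    rw [Finset.sum_range_succ, mul_add, ih, Finset.prod_Icc_succ_top (by omega)]
    ring

/-- For `N ≥ 1`, in `ℤ[q]` one has
`q * Σ_{n=0}^{N-1} q^n (1-q)(1-q²)⋯(1-q^n) = 1 - (1-q)(1-q²)⋯(1-q^N)`;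
in particular the left-hand side is congruent to `1` modulo the ideal generated by
`(1-q)(1-q²)⋯(1-q^N)`. -/
theorem habiro_q_inverse_identity (N : ℕ) (hN : 1 ≤ N) :
    (X : ℤ[X]) * ∑ n ∈ Finset.range N, X ^ n * ∏ i ∈ Finset.Icc 1 n, (1 - X ^ i) =
      1 - ∏ i ∈ Finset.Icc 1 N, (1 - X ^ i) ∧
    (X : ℤ[X]) * ∑ n ∈ Finset.range N, X ^ n * ∏ i ∈ Finset.Icc 1 n, (1 - X ^ i) ≡
      1 [SMOD Ideal.span ({∏ i ∈ Finset.Icc 1 N, (1 - X ^ i)} : Set ℤ[X])] := by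
  refine ⟨X_mul_sum_qPochhammer N, ?_⟩
  rw [X_mul_sum_qPochhammer, SModEq.sub_mem, Ideal.mem_span_singleton]
  exact ⟨-1, by ring⟩
end

section
/- For every odd positive integer n, the sum Σ_{m=0}^{n−1} f_m(1−n) is nonnegative, where f_m(q) = q^{m(m−1)/2} · ∏_{i=1}^{m}(q^i − 1) with f_0(q) = 1. -/
/-!
For `q ≤ -2` the terms `glCount m q` alternate in sign, starting from `glCount 0 q = 1`. The ratio
of consecutive terms is `q ^ m * (q ^ (m + 1) - 1)`: it is nonpositive for even `m` and at most `-1`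
for odd `m`. Hence each negative term of odd index is outweighed by the positive term of even
index right after it. When `n` is odd, the indices `1, …, n - 1` split into such pairs
`(2k + 1, 2k + 2)`, so the sum is nonnegative; here `q = 1 - n ≤ -2` unless `n = 1`.
-/

/-- `f m q = q^(m(m-1)/2) * (q-1)(q²-1)⋯(q^m-1)`, the number of `𝔽_q`-points of `GL_m`. -/
def glCount (m : ℕ) (q : ℤ) : ℤ :=
  q ^ (m * (m - 1) / 2) * ∏ i ∈ Finset.Icc 1 m, (q ^ i - 1)

lemma glCount_succ (m : ℕ) (q : ℤ) :
    glCount (m + 1) q = glCount m q * (q ^ m * (q ^ (m + 1) - 1)) := by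
  unfold glCount
  rw [Nat.triangle_succ, Finset.prod_Icc_succ_top (by omega), pow_add]
  ring

/-- The sum over `m ≤ 2k` is nonnegative; the sign of the last term is carried along to make the
induction on `k` go through. -/
lemma glCount_sum_nonneg_aux (q : ℤ) (hq : q ≤ -2) (k : ℕ) :
    0 ≤ glCount (2 * k) q ∧ 0 ≤ ∑ m ∈ Finset.range (2 * k + 1), glCount m q := by
  induction k with
  | zero => simp [glCount]
  | succ k ih =>
    obtain ⟨hf, hs⟩ := ih
    have he : 0 ≤ q ^ (2 * k) := (even_two_mul k).pow_nonneg q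
    have ho : q ^ (2 * k + 1) < 0 := (odd_two_mul_add_one k).pow_neg (by omega)
    have h2 : 2 ≤ q ^ (2 * k + 1 + 1) := by
      rw [pow_succ]
      nlinarith
    have hr : q ^ (2 * k + 1) * (q ^ (2 * k + 1 + 1) - 1) ≤ -1 := by nlinarith
    have hodd : glCount (2 * k + 1) q ≤ 0 := by
      rw [glCount_succ]
      exact mul_nonpos_of_nonneg_of_nonpos hf
        (mul_nonpos_of_nonneg_of_nonpos he (by linarith))
    -- The even-indexed term dominates the preceding odd-indexed one in absolute value.
    have hdom : -glCount (2 * k + 1) q ≤ glCount (2 * k + 1 + 1) q := by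
      rw [glCount_succ (2 * k + 1)]
      nlinarith
    rw [show 2 * (k + 1) = 2 * k + 1 + 1 by ring]
    refine ⟨by linarith, ?_⟩
    rw [Finset.sum_range_succ, Finset.sum_range_succ]
    linarith

/-- For every odd positive integer `n`, `Σ_{m=0}^{n-1} f_m(1-n) ≥ 0`. -/
theorem glCount_sum_nonneg_of_odd (n : ℕ) (hn : 0 < n) (hodd : Odd n) :
    0 ≤ ∑ m ∈ Finset.range n, glCount m (1 - (n : ℤ)) := by
  obtain ⟨k, rfl⟩ := hodd
  rcases Nat.eq_zero_or_pos k with rfl | hk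
  · simp [glCount]
  · exact (glCount_sum_nonneg_aux _ (by push_cast; omega) k).2
end

section
/- For every integer n ≥ 3 and every odd integer m ≥ 1, one has f_m(1−n) + f_{m+1}(1−n) > 0, where f_m(q) = q^{m(m−1)/2} · ∏_{i=1}^{m}(q^i − 1). -/
lemma ratio_lt_neg_one (m : ℕ) {q : ℤ} (hq : q ≤ -2) : q ^ m * (q ^ (m + 1) - 1) < -1 := by
  -- The bound below, `q x² - x ≤ -2x² - x` with `x = q ^ m`, is `< -1` unless `x ∈ {0, -1}`.
  have hx : 1 ≤ q ^ m ∨ q ^ m ≤ -2 := by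
    rcases Nat.even_or_odd m with h | h
    · left
      have := h.pow_pos (a := q) (by omega)
      omega
    · right
      obtain ⟨k, rfl⟩ := h
      have h2 : 0 < q ^ (2 * k) := (even_two_mul k).pow_pos (by omega)
      rw [pow_succ]
      nlinarith
  rw [pow_succ]
  generalize q ^ m = x at hx
  rcases hx with hx | hx <;> nlinarith [mul_nonneg (sq_nonneg x) (by linarith : 0 ≤ -2 - q)]

lemma neg_one_pow_mul_glCount_pos (m : ℕ) {q : ℤ} (hq : q ≤ -2) :
    0 < (-1) ^ m * glCount m q := by
  induction m with
  | zero => simp [glCount]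
  | succ m ih =>
    have hr := ratio_lt_neg_one m hq
    rw [glCount_succ, pow_succ]
    nlinarith

/-- For every integer `n ≥ 3` and every odd `m ≥ 1`,
`f_m(1-n) + f_{m+1}(1-n) > 0`. -/
theorem glCount_pair_pos (n : ℕ) (hn : 3 ≤ n) (m : ℕ) (hm : 1 ≤ m) (hodd : Odd m) :
    0 < glCount m (1 - (n : ℤ)) + glCount (m + 1) (1 - (n : ℤ)) := by
  have hq : 1 - (n : ℤ) ≤ -2 := by omega
  have hf := neg_one_pow_mul_glCount_pos m hq
  have hr := ratio_lt_neg_one m hq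
  rw [hodd.neg_one_pow] at hf
  rw [glCount_succ]
  nlinarith
end

section
/- For every odd positive integer n, the sum Σ_{m=0}^{n−1} E_m(1−n) is nonnegative, where E_m(q) = q^{m²} · ∏_{i=1}^{m}(q^{2i} − 1) with E_0(q) = 1. -/
/-!
For `n ≥ 3` put `q = 1 - n ≤ -2`. All factors `q^(2i) - 1` are positive, so `E m q` has the sign
`(-1)^m` of `q^(m²)`. Moreover `E (m+1) q = E m q * (q^(2m+1) * (q^(2m+2) - 1))`
(`matEqCount_succ`), where the factor is at most `-1`, so the terms alternate in sign and grow in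
absolute value. Hence each pair `E (2k+1) q + E (2k+2) q` is nonnegative
(`matEqCount_pair_nonneg`). For odd `n` the sum is `E 0 q = 1` plus such pairs.
-/

/-- `E m q = q^(m²) * (q²-1)(q⁴-1)⋯(q^(2m)-1)`, the number of solutions of the
matrix equation `X'AX = A` over `𝔽_q` for a nonsingular `2m × 2m` matrix `A`. -/
def matEqCount (m : ℕ) (q : ℤ) : ℤ :=
  q ^ (m ^ 2) * ∏ i ∈ Finset.Icc 1 m, (q ^ (2 * i) - 1)

theorem matEqCount_succ (m : ℕ) (q : ℤ) :
    matEqCount (m + 1) q = matEqCount m q * (q ^ (2 * m + 1) * (q ^ (2 * (m + 1)) - 1)) := by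
  unfold matEqCount
  rw [Finset.prod_Icc_succ_top (by omega)]
  ring

theorem one_le_pow_two_mul_sub_one {q : ℤ} (hq : q ≤ -2) (i : ℕ) (hi : 1 ≤ i) :
    1 ≤ q ^ (2 * i) - 1 := by
  have h4 : (4 : ℤ) ≤ q ^ 2 := by nlinarith
  have h := pow_le_pow_right₀ (by linarith : (1 : ℤ) ≤ q ^ 2) hi
  rw [pow_one, ← pow_mul] at h
  linarith

theorem matEqCount_odd_nonpos {q : ℤ} (hq : q ≤ -2) (k : ℕ) :
    matEqCount (2 * k + 1) q ≤ 0 := by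
  unfold matEqCount
  apply mul_nonpos_of_nonpos_of_nonneg
  · have ho : Odd ((2 * k + 1) ^ 2) := Odd.pow ⟨k, rfl⟩
    exact ho.pow_nonpos (by linarith)
  · refine Finset.prod_nonneg fun i hi => ?_
    have := one_le_pow_two_mul_sub_one hq i (Finset.mem_Icc.mp hi).1
    linarith

theorem matEqCount_pair_nonneg {q : ℤ} (hq : q ≤ -2) (k : ℕ) :
    0 ≤ matEqCount (2 * k + 1) q + matEqCount (2 * k + 2) q := by
  have h1 := matEqCount_odd_nonpos hq k
  have h2 := one_le_pow_two_mul_sub_one hq (2 * k + 1 + 1) (by omega)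
  have h3 : q ^ (2 * (2 * k + 1) + 1) < 0 := Odd.pow_neg ⟨2 * k + 1, rfl⟩ (by linarith)
  rw [matEqCount_succ (2 * k + 1)]
  have h4 : q ^ (2 * (2 * k + 1) + 1) * (q ^ (2 * (2 * k + 1 + 1)) - 1) ≤ -1 := by nlinarith
  nlinarith

/-- The number of terms `2k + 1` is decoupled from `q` here so that induction on `k` applies. -/
theorem matEqCount_sum_nonneg {q : ℤ} (hq : q ≤ -2) (k : ℕ) :
    0 ≤ ∑ m ∈ Finset.range (2 * k + 1), matEqCount m q := by
  induction k with
  | zero => simp [matEqCount]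
  | succ k ih =>
    rw [show 2 * (k + 1) + 1 = 2 * k + 1 + 1 + 1 by ring, Finset.sum_range_succ,
      Finset.sum_range_succ]
    have := matEqCount_pair_nonneg hq k
    linarith

/-- For every odd positive integer `n`, `Σ_{m=0}^{n-1} E_m(1-n) ≥ 0`. -/
theorem matEqCount_sum_nonneg_of_odd (n : ℕ) (hn : 0 < n) (hodd : Odd n) :
    0 ≤ ∑ m ∈ Finset.range n, matEqCount m (1 - (n : ℤ)) := by
  obtain ⟨k, rfl⟩ := hodd
  rcases Nat.eq_zero_or_pos k with rfl | hk
  -- For `n = 1` the base `q` is `0` and only the term `E 0 0 = 1` occurs.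
  · simp [matEqCount]
  · exact matEqCount_sum_nonneg (by push_cast; omega) k
end

section
/- For every integer n ≥ 2 with n ≡ 2 (mod 4), the sum Σ_{m=0}^{n/2−1} E_m(1−n) is nonnegative, where E_m(q) = q^{m²} · ∏_{i=1}^{m}(q^{2i} − 1) with E_0(q) = 1. -/
/-- For `q < 0` and `m` odd, `E m q ≤ 0` while `E (m + 1) q = E m q * q^(2m+1) * (q^(2m+2) - 1)`
is nonnegative and at least as large in absolute value (both vanish when `q = -1`). -/
theorem matEqCount_add_succ_nonneg (q : ℤ) (hq : q < 0) (m : ℕ) (hm : Odd m) :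
    0 ≤ matEqCount m q + matEqCount (m + 1) q := by
  have hm1 : 1 ≤ m := hm.pos
  have hodd : Odd (2 * m + 1) := ⟨m, rfl⟩
  have hone : ∀ i : ℕ, 1 ≤ q ^ (2 * i) := fun i => by
    rw [pow_mul]
    exact one_le_pow₀ (by nlinarith)
  have hE : matEqCount m q ≤ 0 := by
    unfold matEqCount
    exact mul_nonpos_of_nonpos_of_nonneg (hm.pow.pow_neg hq).le
      (Finset.prod_nonneg fun i _ => by linarith [hone i])
  have hsucc : matEqCount (m + 1) q =
      matEqCount m q * (q ^ (2 * m + 1) * (q ^ (2 * (m + 1)) - 1)) := by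
    unfold matEqCount
    rw [Finset.prod_Icc_succ_top (by omega)]
    ring
  rw [hsucc]
  rcases eq_or_ne q (-1) with rfl | hne
  · -- the factor `q^2 - 1` of `E m q` vanishes
    have h0 : matEqCount m (-1) = 0 := by
      unfold matEqCount
      rw [Finset.prod_eq_zero (Finset.mem_Icc.2 ⟨le_rfl, hm1⟩) (by norm_num), mul_zero]
    simp [h0]
  · have h1 : q ^ (2 * m + 1) ≤ -1 := by
      have := hodd.pow_neg hq
      omega
    have h2 : 1 ≤ q ^ (2 * (m + 1)) - 1 := by
      have hsq : 4 ≤ q ^ 2 := by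
        have : q ≤ -2 := by omega
        nlinarith
      have : q ^ (2 * (m + 1)) = q ^ (2 * m) * q ^ 2 := by ring
      nlinarith [hone m]
    have h3 : q ^ (2 * m + 1) * (q ^ (2 * (m + 1)) - 1) ≤ -1 := by nlinarith
    nlinarith

theorem matEqCount_sum_odd_nonneg (q : ℤ) (hq : q < 0) (k : ℕ) :
    0 ≤ ∑ m ∈ Finset.range (2 * k + 1), matEqCount m q := by
  induction k with
  | zero => simp [matEqCount]
  | succ k ih =>
    rw [show 2 * (k + 1) + 1 = 2 * k + 1 + 1 + 1 by ring, Finset.sum_range_succ,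
      Finset.sum_range_succ]
    linarith [matEqCount_add_succ_nonneg q hq (2 * k + 1) ⟨k, rfl⟩]

/-- For every integer `n ≥ 2` with `n ≡ 2 (mod 4)`, `Σ_{m=0}^{n/2-1} E_m(1-n) ≥ 0`. -/
theorem matEqCount_sum_nonneg_of_two_mod_four (n : ℕ) (hn : 2 ≤ n) (hmod : n % 4 = 2) :
    0 ≤ ∑ m ∈ Finset.range (n / 2), matEqCount m (1 - (n : ℤ)) := by
  obtain ⟨k, hk⟩ : ∃ k, n / 2 = 2 * k + 1 := ⟨n / 4, by omega⟩
  rw [hk]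
  exact matEqCount_sum_odd_nonneg _ (by omega) k
end

section
/- Let n ≥ 3 be an integer and set E_m(q) = q^{m²} · ∏_{i=1}^{m}(q^{2i} − 1). Then for every even integer m ≥ 2 one has E_{m−1}(1−n) + E_m(1−n) > 0, and for every odd integer m ≥ 3 one has E_{m−1}(1−n) + E_m(1−n) < 0. -/
lemma two_lt_even_pow {q : ℤ} (hq : q ≤ -2) {i : ℕ} (hi : 1 ≤ i) : 2 < q ^ (2 * i) := by
  have h4 : (4 : ℤ) ≤ q ^ 2 := by nlinarith
  have h := le_self_pow₀ (by linarith : (1 : ℤ) ≤ q ^ 2) (by omega : i ≠ 0)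
  rw [pow_mul]
  linarith

/-- The sum of two consecutive counts is `q ^ k²` times a negative integer. -/
lemma matEqCount_add_succ {q : ℤ} (hq : q ≤ -2) (k : ℕ) :
    ∃ c < 0, matEqCount k q + matEqCount (k + 1) q = q ^ (k ^ 2) * c := by
  refine ⟨(∏ i ∈ Finset.Icc 1 k, (q ^ (2 * i) - 1)) *
    (1 + q ^ (2 * k + 1) * (q ^ (2 * (k + 1)) - 1)), ?_, ?_⟩
  · apply mul_neg_of_pos_of_neg
    · refine Finset.prod_pos fun i hi => ?_
      have := two_lt_even_pow hq (Finset.mem_Icc.mp hi).1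
      linarith
    · have h1 : q ^ (2 * k + 1) < 0 := Odd.pow_neg ⟨k, rfl⟩ (by linarith)
      have h2 := two_lt_even_pow hq (by omega : 1 ≤ k + 1)
      nlinarith
  · unfold matEqCount
    rw [Finset.prod_Icc_succ_top (by omega), show (k + 1) ^ 2 = k ^ 2 + (2 * k + 1) by ring,
      pow_add q (k ^ 2)]
    ring

/-- For `n ≥ 3`: for every even `m ≥ 2`, `E_{m-1}(1-n) + E_m(1-n) > 0`, and for every
odd `m ≥ 3`, `E_{m-1}(1-n) + E_m(1-n) < 0`. -/
theorem matEqCount_pair_signs (n : ℕ) (hn : 3 ≤ n) :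
    (∀ m : ℕ, 2 ≤ m → Even m →
      0 < matEqCount (m - 1) (1 - (n : ℤ)) + matEqCount m (1 - (n : ℤ))) ∧
    (∀ m : ℕ, 3 ≤ m → Odd m →
      matEqCount (m - 1) (1 - (n : ℤ)) + matEqCount m (1 - (n : ℤ)) < 0) := by
  have hq : 1 - (n : ℤ) ≤ -2 := by omega
  constructor
  · intro m hm he
    obtain ⟨k, rfl⟩ : ∃ k, m = k + 1 := ⟨m - 1, by omega⟩
    obtain ⟨c, hc, h⟩ := matEqCount_add_succ hq k
    have hk : Odd k := by grind
    rw [Nat.add_sub_cancel, h]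
    exact mul_pos_of_neg_of_neg (hk.pow.pow_neg (by linarith)) hc
  · intro m hm ho
    obtain ⟨k, rfl⟩ : ∃ k, m = k + 1 := ⟨m - 1, by omega⟩
    obtain ⟨c, hc, h⟩ := matEqCount_add_succ hq k
    have hk : Even k := by grind
    rw [Nat.add_sub_cancel, h]
    exact mul_neg_of_pos_of_neg ((hk.pow_of_ne_zero two_ne_zero).pow_pos (by omega)) hc
end

section
/- For every positive integer n with n = 1 or n ≡ 3 (mod 4), one has S_σ(n) ≥ 0, where S_σ(n) = 1 + Σ_{m=0}^{n−1} (1−n)^{m+1} · ∏_{i=1}^{m}((1−n)^i − 1) (empty product = 1). -/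
/-!
Put `q = 1 - n ≤ -2` and `T m = q ^ (m + 1) * ∏ i ∈ Icc 1 m, (q ^ i - 1)`. Since
`|T (m + 1)| = |q| * |q ^ (m + 1) - 1| * |T m| ≥ 2 * |T m|`, each partial sum
`1 + ∑ m < k, T m` is bounded in absolute value by the next term `|T k|`
(`abs_partial_le_abs_term`), so the last term decides the sign of the full sum. For `n = 4 * j + 3`
that term has index `4 * j + 2`: it carries `2 * j + 1` negative factors `q ^ i - 1` (the odd `i`)
and the negative power `q ^ (4 * j + 3)`, hence is nonnegative.
-/

/-- `S_σ(n) = 1 + Σ_{m=0}^{n-1} (1-n)^(m+1) ((1-n)-1)((1-n)²-1)⋯((1-n)^m-1)`, the value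
at `q = 1-n` of the truncated Habiro expansion of Ramanujan's function `σ(q)`. -/
def sigmaTrunc (n : ℕ) : ℤ :=
  1 + ∑ m ∈ Finset.range n,
    (1 - (n : ℤ)) ^ (m + 1) * ∏ i ∈ Finset.Icc 1 m, ((1 - (n : ℤ)) ^ i - 1)

/-- The terms at least double in absolute value, so they dominate the preceding partial sums. -/
lemma abs_partial_le_abs_term (q : ℤ) (hq : q ≤ -2) (k : ℕ) :
    |1 + ∑ m ∈ Finset.range k, q ^ (m + 1) * ∏ i ∈ Finset.Icc 1 m, (q ^ i - 1)| ≤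
      |q ^ (k + 1) * ∏ i ∈ Finset.Icc 1 k, (q ^ i - 1)| := by
  induction k with
  | zero =>
    simp only [Finset.range_zero, Finset.sum_empty, add_zero, abs_one, zero_add, pow_one,
      Finset.Icc_eq_empty_of_lt Nat.zero_lt_one, Finset.prod_empty, mul_one]
    rw [abs_of_neg (by omega)]
    omega
  | succ k ih =>
    rw [Finset.sum_range_succ, ← add_assoc, Finset.prod_Icc_succ_top (by omega)]
    set P := ∏ i ∈ Finset.Icc 1 k, (q ^ i - 1)
    have hq2 : 2 ≤ |q| := by rw [abs_of_neg (by omega)]; omega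
    have hpow : 2 ≤ |q ^ (k + 1)| := by
      rw [abs_pow]
      exact hq2.trans (le_self_pow₀ (by omega) (by omega))
    have hfac : 1 ≤ |q ^ (k + 1) - 1| := by
      have := abs_sub_abs_le_abs_sub (q ^ (k + 1)) 1
      rw [abs_one] at this
      omega
    have hratio : 2 ≤ |q| * |q ^ (k + 1) - 1| := by nlinarith
    calc _ ≤ _ := abs_add_le _ _
      _ ≤ 2 * |q ^ (k + 1) * P| := by omega
      _ ≤ (|q| * |q ^ (k + 1) - 1|) * |q ^ (k + 1) * P| := by gcongr
      _ = _ := by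
        rw [← abs_mul, ← abs_mul]
        ring_nf

lemma prod_nonpos_of_two_mod_four (q : ℤ) (hq : q ≤ -2) (j : ℕ) :
    ∏ i ∈ Finset.Icc 1 (4 * j + 2), (q ^ i - 1) ≤ 0 := by
  have hodd : ∀ i, Odd i → q ^ i - 1 ≤ 0 := fun i hi => by
    have := hi.pow_nonpos (a := q) (by omega)
    omega
  have heven : ∀ i, Even i → 0 ≤ q ^ i - 1 := fun i hi => by
    have := hi.pow_pos (a := q) (by omega)
    omega
  induction j with
  | zero =>
    rw [Finset.prod_Icc_succ_top (by omega), Finset.prod_Icc_succ_top (by omega)]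
    simpa using mul_nonpos_of_nonpos_of_nonneg (hodd 1 (by decide)) (heven 2 (by decide))
  | succ j ih =>
    rw [show 4 * (j + 1) + 2 = 4 * j + 2 + 1 + 1 + 1 + 1 by ring]
    iterate 4 rw [Finset.prod_Icc_succ_top (by omega)]
    refine mul_nonpos_of_nonpos_of_nonneg (mul_nonpos_of_nonneg_of_nonpos
      (mul_nonneg (mul_nonneg_of_nonpos_of_nonpos ih (hodd _ ?_)) (heven _ ?_))
      (hodd _ ?_)) (heven _ ?_) <;> grind

/-- For `n = 1` or `n ≡ 3 (mod 4)`, `S_σ(n) ≥ 0`. -/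
theorem sigmaTrunc_nonneg (n : ℕ) (hn : n = 1 ∨ n % 4 = 3) :
    0 ≤ sigmaTrunc n := by
  rcases hn with rfl | hn
  · simp [sigmaTrunc]
  · obtain ⟨j, rfl⟩ : ∃ j, n = 4 * j + 2 + 1 := ⟨n / 4, by omega⟩
    unfold sigmaTrunc
    have hq : 1 - ((4 * j + 2 + 1 : ℕ) : ℤ) ≤ -2 := by omega
    generalize 1 - ((4 * j + 2 + 1 : ℕ) : ℤ) = q at hq ⊢
    have hlast : 0 ≤ q ^ (4 * j + 2 + 1) * ∏ i ∈ Finset.Icc 1 (4 * j + 2), (q ^ i - 1) :=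
      mul_nonneg_of_nonpos_of_nonpos (Odd.pow_nonpos (by grind) (by omega))
        (prod_nonpos_of_two_mod_four q hq j)
    have hdom := abs_partial_le_abs_term q hq (4 * j + 2)
    rw [abs_of_nonneg hlast] at hdom
    rw [Finset.sum_range_succ]
    linarith [(abs_le.mp hdom).1]
end

section
/- For every integer n ≥ 4 with n ≡ 0 (mod 4), one has S_σ(n) ≥ 0, where S_σ(n) = 1 + Σ_{m=0}^{n−1} (1−n)^{m+1} · ∏_{i=1}^{m}((1−n)^i − 1) (empty product = 1). -/
/-- A block of four terms, divided by its common positive factor `x * Q * P`, where `Q = x ^ (4j)`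
and `P` is the product of the first `4j` factors. -/
lemma sigma_block_nonneg (x Q : ℤ) (hx : 3 ≤ x) (hQ : 1 ≤ Q) :
    0 ≤ -1 - x * (x * Q + 1) + x ^ 2 * ((x * Q + 1) * (x ^ 2 * Q - 1))
      + x ^ 3 * ((x * Q + 1) * (x ^ 2 * Q - 1) * (x ^ 3 * Q + 1)) := by
  have hA : 1 ≤ x * Q + 1 := by nlinarith
  have hB : 2 ≤ x ^ 2 * Q - 1 := by nlinarith
  have h4 : 0 ≤ x ^ 3 * ((x * Q + 1) * (x ^ 2 * Q - 1) * (x ^ 3 * Q + 1)) := by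
    have : 0 ≤ x ^ 2 * Q - 1 := by linarith
    positivity
  generalize x * Q + 1 = A at *
  generalize x ^ 2 * Q - 1 = B at *
  have hAB : A * 2 ≤ A * B := mul_le_mul_of_nonneg_left hB (by linarith)
  have h3 : x ^ 2 * (A * 2) ≤ x ^ 2 * (A * B) := mul_le_mul_of_nonneg_left hAB (by positivity)
  have hxA : 1 ≤ x * A := by nlinarith
  nlinarith

/-- The product is carried along in the induction because it is the common factor of a block. -/
lemma sigma_blocks (x : ℤ) (hx : 3 ≤ x) (k : ℕ) :
    0 < ∏ i ∈ Finset.Icc 1 (4 * k), ((-x) ^ i - 1) ∧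
    0 ≤ ∑ m ∈ Finset.range (4 * k), (-x) ^ (m + 1) * ∏ i ∈ Finset.Icc 1 m, ((-x) ^ i - 1) := by
  induction k with
  | zero => simp
  | succ k ih =>
    obtain ⟨hP, hS⟩ := ih
    have hstep (m : ℕ) : ∏ i ∈ Finset.Icc 1 (m + 1), ((-x) ^ i - 1)
        = (∏ i ∈ Finset.Icc 1 m, ((-x) ^ i - 1)) * ((-x) ^ (m + 1) - 1) :=
      Finset.prod_Icc_succ_top (by omega) _
    have hQx : (-x) ^ (4 * k) = x ^ (4 * k) := Even.neg_pow ⟨2 * k, by ring⟩ x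
    have hQ : 1 ≤ x ^ (4 * k) := one_le_pow₀ (by linarith)
    have e : 4 * (k + 1) = 4 * k + 1 + 1 + 1 + 1 := by ring
    rw [e]
    simp only [Finset.sum_range_succ, hstep]
    generalize ∑ m ∈ Finset.range (4 * k), (-x) ^ (m + 1) * ∏ i ∈ Finset.Icc 1 m, ((-x) ^ i - 1)
      = S at *
    simp only [pow_succ, hQx]
    generalize x ^ (4 * k) = Q at *
    generalize ∏ i ∈ Finset.Icc 1 (4 * k), ((-x) ^ i - 1) = P at *
    have hB := sigma_block_nonneg x Q hx hQ
    constructor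
    · have h2 : 0 < x ^ 2 * Q - 1 := by nlinarith
      have h4 : 0 < x ^ 4 * Q - 1 := by nlinarith [sq_nonneg (x ^ 2), pow_le_pow_left₀ (by norm_num) hx 4]
      have : 0 < P * ((x * Q + 1) * (x ^ 2 * Q - 1) * (x ^ 3 * Q + 1) * (x ^ 4 * Q - 1)) := by
        positivity
      convert this using 1
      ring
    · have : 0 ≤ x * Q * P * _ := mul_nonneg (by positivity) hB
      linear_combination hS + this

/-- For every integer `n ≥ 4` with `n ≡ 0 (mod 4)`, `S_σ(n) ≥ 0`. -/
theorem sigmaTrunc_nonneg_of_zero_mod_four (n : ℕ) (hn : 4 ≤ n) (hmod : n % 4 = 0) :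
    0 ≤ sigmaTrunc n := by
  have h := (sigma_blocks ((n : ℤ) - 1) (by omega) (n / 4)).2
  rw [Nat.mul_div_cancel' (Nat.dvd_of_mod_eq_zero hmod), neg_sub] at h
  unfold sigmaTrunc
  linarith
end

section
/- For every integer n ≥ 5 with n ≡ 1 (mod 4), and for every integer n ≥ 2 with n ≡ 2 (mod 4), one has S_σ(n) < 0, where S_σ(n) = 1 + Σ_{m=0}^{n−1} (1−n)^{m+1} · ∏_{i=1}^{m}((1−n)^i − 1) (empty product = 1). -/
/-- The `m`-th summand `q^(m+1) (q-1)(q²-1)⋯(q^m-1)` of the Habiro expansion of `σ(q)`. -/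
def sigmaTerm (q : ℤ) (m : ℕ) : ℤ :=
  q ^ (m + 1) * ∏ i ∈ Finset.Icc 1 m, (q ^ i - 1)

lemma sigmaTerm_zero (q : ℤ) : sigmaTerm q 0 = q := by simp [sigmaTerm]

lemma sigmaTerm_succ (q : ℤ) (m : ℕ) :
    sigmaTerm q (m + 1) = q * (q ^ (m + 1) - 1) * sigmaTerm q m := by
  unfold sigmaTerm
  rw [Finset.prod_Icc_succ_top (by omega)]
  ring

lemma pow_succ_sub_one_ne_zero {q : ℤ} (hq : q ≤ -4) (m : ℕ) : q ^ (m + 1) - 1 ≠ 0 := by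
  intro h
  have hu : IsUnit q := IsUnit.of_pow_eq_one (sub_eq_zero.mp h) (by omega)
  rcases Int.isUnit_iff.mp hu with h | h <;> omega

lemma sigmaTerm_dominates {q : ℤ} (hq : q ≤ -4) (k : ℕ) :
    |1 + ∑ m ∈ Finset.range k, sigmaTerm q m| < |sigmaTerm q k| := by
  induction k with
  | zero =>
    rw [sigmaTerm_zero, abs_of_neg (by omega : q < 0)]
    simp
    omega
  | succ k ih =>
    rw [Finset.sum_range_succ, ← add_assoc, sigmaTerm_succ, abs_mul, abs_mul]
    have h1 : 1 ≤ |q ^ (k + 1) - 1| := Int.one_le_abs (pow_succ_sub_one_ne_zero hq k)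
    have h4 : 4 ≤ |q| := by rw [abs_of_neg (by omega)]; omega
    have h5 : 4 ≤ |q| * |q ^ (k + 1) - 1| := by nlinarith
    have h6 := abs_add_le (1 + ∑ m ∈ Finset.range k, sigmaTerm q m) (sigmaTerm q k)
    have h7 := mul_le_mul_of_nonneg_right h5 (abs_nonneg (sigmaTerm q k))
    linarith [abs_nonneg (sigmaTerm q k)]

lemma multiplier_pos {q : ℤ} (hq : q ≤ -4) {m : ℕ} (hm : Even m) :
    0 < q * (q ^ (m + 1) - 1) := by
  have : q ^ (m + 1) < 0 := hm.add_one.pow_neg (by omega)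
  exact mul_pos_of_neg_of_neg (by omega) (by omega)

lemma multiplier_neg {q : ℤ} (hq : q ≤ -4) {m : ℕ} (hm : Odd m) :
    q * (q ^ (m + 1) - 1) < 0 := by
  have h : 0 < q ^ (m + 1) := hm.add_one.pow_pos (by omega)
  have := pow_succ_sub_one_ne_zero hq m
  exact mul_neg_of_neg_of_pos (by omega) (by omega)

lemma sigmaTerm_sign {q : ℤ} (hq : q ≤ -4) (j : ℕ) :
    sigmaTerm q (4 * j) < 0 ∧ sigmaTerm q (4 * j + 1) < 0 := by
  have next (i : ℕ) (h : sigmaTerm q (4 * i) < 0) : sigmaTerm q (4 * i + 1) < 0 := by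
    rw [sigmaTerm_succ]
    exact mul_neg_of_pos_of_neg (multiplier_pos hq ⟨2 * i, by ring⟩) h
  induction j with
  | zero =>
    have h : sigmaTerm q (4 * 0) < 0 := by
      rw [mul_zero, sigmaTerm_zero]
      omega
    exact ⟨h, next 0 h⟩
  | succ j ih =>
    have h2 : 0 < sigmaTerm q (4 * j + 1 + 1) := by
      rw [sigmaTerm_succ]
      exact mul_pos_of_neg_of_neg (multiplier_neg hq ⟨2 * j, by ring⟩) ih.2
    have h3 : 0 < sigmaTerm q (4 * j + 1 + 1 + 1) := by
      rw [sigmaTerm_succ]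
      exact mul_pos (multiplier_pos hq ⟨2 * j + 1, by ring⟩) h2
    have h4 : sigmaTerm q (4 * (j + 1)) < 0 := by
      rw [show 4 * (j + 1) = 4 * j + 1 + 1 + 1 + 1 by ring, sigmaTerm_succ]
      exact mul_neg_of_neg_of_pos (multiplier_neg hq ⟨2 * j + 1, by ring⟩) h3
    exact ⟨h4, next _ h4⟩

/-- For every `n ≥ 5` with `n ≡ 1 (mod 4)` and every `n ≥ 2` with `n ≡ 2 (mod 4)`,
`S_σ(n) < 0`. -/
theorem sigmaTrunc_neg (n : ℕ) (hn : (5 ≤ n ∧ n % 4 = 1) ∨ (2 ≤ n ∧ n % 4 = 2)) :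
    sigmaTrunc n < 0 := by
  by_cases h2 : n = 2
  · subst h2
    decide
  have hq : 1 - (n : ℤ) ≤ -4 := by omega
  obtain ⟨k, rfl⟩ : ∃ k, n = k + 1 := ⟨n - 1, by omega⟩
  have hneg : sigmaTerm (1 - ((k + 1 : ℕ) : ℤ)) k < 0 := by
    have hs := sigmaTerm_sign hq (k / 4)
    have hk : k = 4 * (k / 4) ∨ k = 4 * (k / 4) + 1 := by omega
    generalize 1 - ((k + 1 : ℕ) : ℤ) = q at hs ⊢
    rcases hk with hk | hk <;> rw [hk]
    exacts [hs.1, hs.2]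
  have hd := sigmaTerm_dominates hq k
  rw [abs_of_neg hneg] at hd
  change 1 + ∑ m ∈ Finset.range (k + 1), sigmaTerm (1 - ((k + 1 : ℕ) : ℤ)) m < 0
  rw [Finset.sum_range_succ]
  linarith [le_abs_self (1 + ∑ m ∈ Finset.range k, sigmaTerm (1 - ((k + 1 : ℕ) : ℤ)) m)]
end

section
/- For every integer n ≥ 4 with n ≡ 0 (mod 4), one has 2 · Σ_{k=0}^{n/2−1} (−1)^{k+1} (1−n)^{k+1} · ∏_{i=1}^{k}((1−n)^{2i} − 1) ≥ 0 (empty product = 1). -/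
/-- For every integer `n ≥ 4` with `n ≡ 0 (mod 4)`, the value at `q = 1-n` of the
truncation at `k = n/2 - 1` of the Habiro expansion
`σ*(q) = 2 Σ_{k≥0} (-1)^(k+1) q^(k+1) (q²-1)(q⁴-1)⋯(q^(2k)-1)` is nonnegative. -/
theorem sigmaStarTrunc_nonneg_of_zero_mod_four (n : ℕ) (hn : 4 ≤ n) (hmod : n % 4 = 0) :
    0 ≤ 2 * ∑ k ∈ Finset.range (n / 2),
      (-1 : ℤ) ^ (k + 1) * (1 - (n : ℤ)) ^ (k + 1) *
        ∏ i ∈ Finset.Icc 1 k, ((1 - (n : ℤ)) ^ (2 * i) - 1) := by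
  refine mul_nonneg zero_le_two (Finset.sum_nonneg fun k _ => mul_nonneg ?_ ?_)
  -- The two sign factors combine: `(-1)^(k+1) * (1-n)^(k+1) = (n-1)^(k+1)`, with `n - 1 ≥ 0`.
  · rw [← mul_pow]
    exact pow_nonneg (by lia) _
  -- Each factor is an even power of a nonzero integer minus one.
  · refine Finset.prod_nonneg fun i _ => ?_
    have hsq : 0 < ((1 - (n : ℤ)) ^ 2) := by
      have hne : 1 - (n : ℤ) ≠ 0 := by lia
      positivity
    rw [pow_mul]
    have := pow_pos hsq i
    lia
end
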